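/- Let A = [[1, −1], [1, 1]] be the quincunx matrix and B = Aᵗ. Let ψ ∈ L²(ℝ²) be the function whose Fourier transform \hat{ψ}(ξ₁,ξ₂) = g(|ξ₁|,|ξ₂|), where g is the piecewise linear tent function equal to −1+2x₁+2x₂ on the triangle with vertices (1/2,0),(0,1/2),(1/2,1/2); 2x₂ on the triangle (1/2,0),(1,0),(1/2,1/2); 2x₁ on the triangle (0,1),(0,1/2),(1/2,1/2); 2−2x₁ on the triangle (1,0),(1,1),(1/2,1/2); 2−2x₂ on the triangle (0,1),(1,1),(1/2,1/2); and 0 otherwise. Define φ(x) = (1/4)ψ(x) + (1/4)ψ(A⁻¹x) + (1/8)ψ(A⁻²x). Then ψ and φ generate dual frames {D_{A^j} T_{k/2} ψ : j ∈ ℤ, k ∈ ℤ²} and {D_{A^j} T_{k/2} φ : j ∈ ℤ, k ∈ ℤ²} for L²(ℝ²). -/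

import Mathlib

open MeasureTheory Complex Set
open scoped ENNReal Topology ComplexConjugate Classical

noncomputable section

abbrev ℝn (n : ℕ) := Fin n → ℝ

/-- The Fourier transform `f̂(ξ) = ∫ f(x) e^{-2πi⟨ξ,x⟩} dx` (pointwise integral). -/
def ftrans {n : ℕ} (f : ℝn n → ℂ) (ξ : ℝn n) : ℂ :=
  ∫ x : ℝn n, Complex.exp (-(2 * Real.pi * (∑ i, ξ i * x i)) * Complex.I) * f x

/-- `fhat` is the (L²-) Fourier transform of `f`, characterized by the multiplication
formula against Schwartz functions. -/
def IsFourierPair {n : ℕ} (fhat f : ℝn n → ℂ) : Prop :=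
  ∀ g : SchwartzMap (ℝn n) ℂ,
    ∫ ξ : ℝn n, fhat ξ * g ξ = ∫ x : ℝn n, f x * ftrans (fun y => g y) x

/-- Dilation operator `D_M f(x) = |det M|^{1/2} f(Mx)`. -/
def dila {n : ℕ} (M : Matrix (Fin n) (Fin n) ℝ) (f : ℝn n → ℂ) : ℝn n → ℂ :=
  fun x => (Real.sqrt |M.det| : ℂ) * f (M.mulVec x)

/-- Translation operator `T_y f(x) = f(x - y)`. -/
def tran {n : ℕ} (y : ℝn n) (f : ℝn n → ℂ) : ℝn n → ℂ :=
  fun x => f (x - y)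

/-- Inner product `⟨f, g⟩ = ∫ f ⬝ conj g` of two functions. -/
def ip {n : ℕ} (f g : ℝn n → ℂ) : ℂ := ∫ x : ℝn n, f x * conj (g x)

/-- The element of L² determined by a square-integrable function (junk value `0` otherwise). -/
def toL2 {n : ℕ} (f : ℝn n → ℂ) : Lp ℂ 2 (volume : Measure (ℝn n)) :=
  if h : MemLp f 2 volume then h.toLp f else 0

/-- `F` is a Bessel family with bound `C`. -/
def IsBesselWith {n : ℕ} {ι : Type*} (F : ι → ℝn n → ℂ) (C : ℝ) : Prop :=
  ∀ f : ℝn n → ℂ, MemLp f 2 volume →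
    ∑' i, ((‖ip f (F i)‖₊ : ℝ≥0∞)) ^ 2 ≤ ENNReal.ofReal C * ∫⁻ x, (‖f x‖₊ : ℝ≥0∞) ^ 2

/-- `F` is a frame with bounds `C₁, C₂`. -/
def IsFrameWith {n : ℕ} {ι : Type*} (F : ι → ℝn n → ℂ) (C₁ C₂ : ℝ) : Prop :=
  ∀ f : ℝn n → ℂ, MemLp f 2 volume →
    ENNReal.ofReal C₁ * (∫⁻ x, (‖f x‖₊ : ℝ≥0∞) ^ 2) ≤ ∑' i, ((‖ip f (F i)‖₊ : ℝ≥0∞)) ^ 2 ∧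
    ∑' i, ((‖ip f (F i)‖₊ : ℝ≥0∞)) ^ 2 ≤ ENNReal.ofReal C₂ * ∫⁻ x, (‖f x‖₊ : ℝ≥0∞) ^ 2

/-- Reconstruction property: `f = ∑ᵢ ⟨f, G i⟩ F i` for every `f ∈ L²`. -/
def ReconstructionProp {n : ℕ} {ι : Type*} (F G : ι → ℝn n → ℂ) : Prop :=
  ∀ f : ℝn n → ℂ, MemLp f 2 volume →
    HasSum (fun i => ip f (G i) • toL2 (F i)) (toL2 f)

/-- Two families are dual frames: both are Bessel and the reconstruction formula holds. -/
def AreDualFrames {n : ℕ} {ι : Type*} (F G : ι → ℝn n → ℂ) : Prop :=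
  (∃ C, IsBesselWith F C) ∧ (∃ C, IsBesselWith G C) ∧ ReconstructionProp F G

/-- A real matrix is expansive if all its (complex) eigenvalues have modulus `> 1`. -/
def IsExpansive {n : ℕ} (M : Matrix (Fin n) (Fin n) ℝ) : Prop :=
  ∀ μ : ℂ, (M.map Complex.ofReal).charpoly.IsRoot μ → 1 < ‖μ‖

/-- Integer vector viewed in `ℝⁿ`. -/
def ivec {n : ℕ} (k : Fin n → ℤ) : ℝn n := fun i => (k i : ℝ)

/-- Image of a set under (the linear map given by) a matrix. -/
def mimg {n : ℕ} (M : Matrix (Fin n) (Fin n) ℝ) (S : Set (ℝn n)) : Set (ℝn n) :=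
  (fun x => M.mulVec x) '' S

/-- The wavelet system `{D_{A^j} T_{Pk} ψ}_{j ∈ ℤ, k ∈ ℤⁿ}` with translation lattice `Pℤⁿ`. -/
def waveletSystem {n : ℕ} (A P : Matrix (Fin n) (Fin n) ℝ) (ψ : ℝn n → ℂ) :
    ℤ × (Fin n → ℤ) → ℝn n → ℂ :=
  fun p => dila (A ^ p.1) (tran (P.mulVec (ivec p.2)) ψ)

/-- `E` is a multiplicative tiling set for `{B^j}`. -/
def IsMultTiling {n : ℕ} (B : Matrix (Fin n) (Fin n) ℝ) (E : Set (ℝn n)) : Prop :=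
  0 < volume E ∧ volume (Set.univ \ ⋃ j : ℤ, mimg (B ^ j) E) = 0 ∧
    ∀ j l : ℤ, j ≠ l → volume (mimg (B ^ j) E ∩ mimg (B ^ l) E) = 0

/-- A bounded multiplicative tiling set. -/
def IsBoundedMultTiling {n : ℕ} (B : Matrix (Fin n) (Fin n) ℝ) (E : Set (ℝn n)) : Prop :=
  IsMultTiling B E ∧ Bornology.IsBounded E ∧ (0 : ℝn n) ∉ closure E


/-- The tent-shaped piecewise linear function `g` of Example 2.6, defined on the five
triangles `J₁, …, J₅`. -/
def tentG (x : Fin 2 → ℝ) : ℝ :=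
  if x 0 ≤ 1 / 2 ∧ x 1 ≤ 1 / 2 ∧ 1 / 2 ≤ x 0 + x 1 then -1 + 2 * x 0 + 2 * x 1
  else if 0 ≤ x 1 ∧ 1 / 2 ≤ x 0 ∧ x 0 + x 1 ≤ 1 then 2 * x 1
  else if 0 ≤ x 0 ∧ 1 / 2 ≤ x 1 ∧ x 0 + x 1 ≤ 1 then 2 * x 0
  else if x 0 ≤ 1 ∧ 1 ≤ x 0 + x 1 ∧ x 1 ≤ x 0 then 2 - 2 * x 0
  else if x 1 ≤ 1 ∧ 1 ≤ x 0 + x 1 ∧ x 0 ≤ x 1 then 2 - 2 * x 1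
  else 0

/-- `ψ̂(ξ₁, ξ₂) = g(|ξ₁|, |ξ₂|)`: the mirroring of `g` in the two coordinate axes. -/
def quincunxPsiHat (ξ : Fin 2 → ℝ) : ℝ := tentG (fun i => |ξ i|)

open FourierTransform SchwartzMap in
lemma ftrans_eq_fourier {n : ℕ} (g : 𝓢(EuclideanSpace ℝ (Fin n), ℂ)) (h : ℝn n → ℂ)
    (hh : ∀ x, h x = g (WithLp.toLp 2 x)) (x : ℝn n) :
    ftrans h x = (𝓕 g) (WithLp.toLp 2 x) := by
  rw [SchwartzMap.fourier_coe, Real.fourier_eq']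
  rw [← (PiLp.volume_preserving_toLp (Fin n)).integral_comp (MeasurableEquiv.toLp 2 _).measurableEmbedding]
  unfold ftrans
  congr 1
  ext y
  rw [hh, smul_eq_mul]
  congr 2
  simp [PiLp.inner_apply]

/-- transfer to Euclidean space -/
def liftE {n : ℕ} {f : ℝn n → ℂ} (hf : MemLp f 2 volume) :
    Lp ℂ 2 (volume : Measure (EuclideanSpace ℝ (Fin n))) :=
  (hf.comp_measurePreserving (PiLp.volume_preserving_ofLp (Fin n))).toLp _

lemma liftE_coe {n : ℕ} {f : ℝn n → ℂ} (hf : MemLp f 2 volume) :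
    liftE hf =ᵐ[volume] fun x => f (WithLp.ofLp x) := MemLp.coeFn_toLp _

lemma integral_liftE {n : ℕ} (F : EuclideanSpace ℝ (Fin n) → ℂ) :
    ∫ x, F x = ∫ x : ℝn n, F (WithLp.toLp 2 x) :=
  ((PiLp.volume_preserving_toLp (Fin n)).integral_comp
    (MeasurableEquiv.toLp 2 _).measurableEmbedding F).symm

open FourierTransform SchwartzMap in
lemma fourier_liftE_apply {n : ℕ} {f : ℝn n → ℂ} (hf : MemLp f 2 volume)
    (g : 𝓢(EuclideanSpace ℝ (Fin n), ℂ)) :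
    ∫ x, g x • (𝓕 (liftE hf) : Lp ℂ 2 (volume : Measure (EuclideanSpace ℝ (Fin n)))) x =
      ∫ x : ℝn n, f x * ftrans (fun y => g (WithLp.toLp 2 y)) x := by
  rw [← Lp.toTemperedDistribution_apply, ← Lp.fourier_toTemperedDistribution_eq,
    TemperedDistribution.fourier_apply, Lp.toTemperedDistribution_apply]
  rw [integral_congr_ae (g := fun x => (𝓕 g) x • f (WithLp.ofLp x))]
  · rw [integral_liftE]
    congr 1
    ext x
    rw [ftrans_eq_fourier g _ (fun _ => rfl), smul_eq_mul, mul_comm]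
  · filter_upwards [liftE_coe hf] with x hx
    rw [hx]

open FourierTransform SchwartzMap in
lemma exists_hat {n : ℕ} {f : ℝn n → ℂ} (hf : MemLp f 2 volume) :
    ∃ fh : ℝn n → ℂ, MemLp fh 2 volume ∧ IsFourierPair fh f := by
  refine ⟨fun x => (𝓕 (liftE hf) : Lp ℂ 2 (volume : Measure (EuclideanSpace ℝ (Fin n))))
    (WithLp.toLp 2 x), (Lp.memLp (𝓕 (liftE hf))).comp_measurePreserving
      (PiLp.volume_preserving_toLp (Fin n)), ?_⟩
  intro g
  have := fourier_liftE_apply hf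
    (compCLMOfContinuousLinearEquiv ℂ (EuclideanSpace.equiv (Fin n) ℝ) g)
  rw [integral_liftE] at this
  simp only [compCLMOfContinuousLinearEquiv_apply, smul_eq_mul] at this
  convert this using 3
  · exact mul_comm _ _
  · rfl

open FourierTransform SchwartzMap in
lemma fourier_liftE {n : ℕ} {f fh : ℝn n → ℂ} (hf : MemLp f 2 volume) (hfh : MemLp fh 2 volume)
    (h : IsFourierPair fh f) : 𝓕 (liftE hf) = liftE hfh := by
  have hk := Lp.ker_toTemperedDistributionCLM_eq_bot (E := EuclideanSpace ℝ (Fin n)) (F := ℂ)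
    (μ := volume) (p := 2)
  have hinj := LinearMap.ker_eq_bot.1 hk
  apply hinj
  ext g
  change Lp.toTemperedDistribution (𝓕 (liftE hf)) g = Lp.toTemperedDistribution (liftE hfh) g
  rw [Lp.toTemperedDistribution_apply, Lp.toTemperedDistribution_apply, fourier_liftE_apply]
  rw [integral_congr_ae (g := fun x => g x • fh (WithLp.ofLp x))]
  · rw [integral_liftE]
    have := h (compCLMOfContinuousLinearEquiv ℂ (EuclideanSpace.equiv (Fin n) ℝ).symm g)
    simp only [compCLMOfContinuousLinearEquiv_apply] at this
    refine Eq.trans ?_ (this.symm.trans ?_)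
    · rfl
    · congr 1
      ext x
      exact mul_comm _ _
  · filter_upwards [liftE_coe hfh] with x hx
    rw [hx]

lemma inner_liftE {n : ℕ} {f g : ℝn n → ℂ} (hf : MemLp f 2 volume) (hg : MemLp g 2 volume) :
    inner ℂ (liftE hg) (liftE hf) = ip f g := by
  rw [L2.inner_def, ip, integral_congr_ae
    (g := fun x => f (WithLp.ofLp x) * conj (g (WithLp.ofLp x)))]
  · rw [integral_liftE]
  · filter_upwards [liftE_coe hf, liftE_coe hg] with x h1 h2
    rw [h1, h2]
    simp

lemma ip_eq_ip_hat {n : ℕ} {f fh g gh : ℝn n → ℂ} (hf : MemLp f 2 volume)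
    (hfh : MemLp fh 2 volume) (hg : MemLp g 2 volume) (hgh : MemLp gh 2 volume)
    (h : IsFourierPair fh f) (h' : IsFourierPair gh g) : ip f g = ip fh gh := by
  rw [← inner_liftE hf hg, ← inner_liftE hfh hgh, ← fourier_liftE hf hfh h,
    ← fourier_liftE hg hgh h', Lp.inner_fourier_eq]


/-- continuous linear equivalence given by an invertible matrix -/
def mvE {n : ℕ} (M : Matrix (Fin n) (Fin n) ℝ) (hM : M.det ≠ 0) : ℝn n ≃L[ℝ] ℝn n :=
  (Matrix.toLin'OfInv (M := M⁻¹) (M' := M) (Matrix.nonsing_inv_mul M (isUnit_iff_ne_zero.2 hM))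
    (Matrix.mul_nonsing_inv M (isUnit_iff_ne_zero.2 hM))).toContinuousLinearEquiv

lemma mvE_apply {n : ℕ} (M : Matrix (Fin n) (Fin n) ℝ) (hM : M.det ≠ 0) (x : ℝn n) :
    mvE M hM x = M.mulVec x := by
  simp [mvE, Matrix.toLin'OfInv]

lemma mvE_coe {n : ℕ} (M : Matrix (Fin n) (Fin n) ℝ) (hM : M.det ≠ 0) :
    ⇑(mvE M hM) = fun x => M.mulVec x := by
  ext1 x; exact mvE_apply M hM x

lemma map_mulVec {n : ℕ} (M : Matrix (Fin n) (Fin n) ℝ) (hM : M.det ≠ 0) :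
    Measure.map (fun x : ℝn n => M.mulVec x) volume = ENNReal.ofReal |M.det|⁻¹ • volume := by
  have := Real.map_matrix_volume_pi_eq_smul_volume_pi hM
  rw [abs_inv] at this
  rw [← this]
  congr 1

lemma emb_mulVec {n : ℕ} (M : Matrix (Fin n) (Fin n) ℝ) (hM : M.det ≠ 0) :
    MeasurableEmbedding (fun x : ℝn n => M.mulVec x) := by
  rw [← mvE_coe M hM]
  exact (mvE M hM).toHomeomorph.measurableEmbedding

lemma integral_mulVec {n : ℕ} (M : Matrix (Fin n) (Fin n) ℝ) (hM : M.det ≠ 0) (F : ℝn n → ℂ) :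
    ∫ x, F (M.mulVec x) = (|M.det|⁻¹ : ℝ) * ∫ x, F x := by
  rw [← (emb_mulVec M hM).integral_map, map_mulVec M hM, integral_smul_measure,
    ENNReal.toReal_ofReal (by positivity)]
  simp

lemma memLp_mulVec {n : ℕ} (M : Matrix (Fin n) (Fin n) ℝ) (hM : M.det ≠ 0) {F : ℝn n → ℂ}
    (hF : MemLp F 2 volume) : MemLp (fun x => F (M.mulVec x)) 2 volume := by
  have := (emb_mulVec M hM).memLp_map_measure_iff (g := F) (μ := volume) (p := 2)
  refine this.1 ?_
  rw [map_mulVec M hM]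
  exact hF.smul_measure ENNReal.ofReal_ne_top

/-- the exponential `e^{-2πi y·x}` -/
def ech {n : ℕ} (y x : ℝn n) : ℂ :=
  Complex.exp (-(2 * Real.pi * (∑ i, y i * x i)) * Complex.I)

lemma norm_ech {n : ℕ} (y x : ℝn n) : ‖ech y x‖ = 1 := by
  have : ech y x = Complex.exp ((-(2 * Real.pi * (∑ i, y i * x i)) : ℝ) * Complex.I) := by
    simp [ech]
  rw [this, Complex.norm_exp_ofReal_mul_I]

lemma ech_add_left {n : ℕ} (y z x : ℝn n) : ech (y + z) x = ech y x * ech z x := by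
  rw [ech, ech, ech, ← Complex.exp_add]
  congr 1
  simp only [Pi.add_apply, ofReal_add, add_mul, Finset.sum_add_distrib, mul_add]
  ring

lemma continuous_ech {n : ℕ} (y : ℝn n) : Continuous (ech y) := by
  unfold ech; fun_prop

lemma ech_mulVec {n : ℕ} (M : Matrix (Fin n) (Fin n) ℝ) (y x : ℝn n) :
    ech (M.mulVec y) x = ech y (M.transpose.mulVec x) := by
  have h : ∑ i, (M.mulVec y) i * x i = ∑ i, y i * (M.transpose.mulVec x) i := by
    change (M.mulVec y) ⬝ᵥ x = y ⬝ᵥ _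
    rw [Matrix.mulVec_transpose, dotProduct_comm, Matrix.dotProduct_mulVec, dotProduct_comm]
  unfold ech
  rw [h]

lemma expI_temperate : Function.HasTemperateGrowth
    (fun t : ℝ => Complex.exp (t * Complex.I)) := by
  have hd : ∀ (k : ℕ), iteratedDeriv k (fun t : ℝ => Complex.exp (t * Complex.I)) =
      fun t : ℝ => Complex.I ^ k * Complex.exp (t * Complex.I) := by
    intro k
    induction k with
    | zero => simp
    | succ k ih =>
      rw [iteratedDeriv_succ, ih]
      ext t
      have h1 : HasDerivAt (fun t : ℝ => (t : ℂ) * Complex.I) Complex.I t := by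
        simpa using (Complex.ofRealCLM.hasDerivAt (x := t)).mul_const Complex.I
      have h2 := (h1.cexp).const_mul (Complex.I ^ k)
      rw [h2.deriv]
      ring
  refine ⟨(Complex.ofRealCLM.contDiff.mul contDiff_const).cexp, fun k => ⟨0, 1, fun t => ?_⟩⟩
  rw [norm_iteratedFDeriv_eq_norm_iteratedDeriv, hd]
  simp [Complex.norm_exp_ofReal_mul_I]

lemma ech_temperate {n : ℕ} (y : ℝn n) : Function.HasTemperateGrowth (ech y) := by
  let L : ℝn n →L[ℝ] ℝ := ∑ i, (-(2 * Real.pi * y i)) • ContinuousLinearMap.proj (R := ℝ) i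
  have : ech y = (fun t : ℝ => Complex.exp (t * Complex.I)) ∘ L := by
    ext x
    simp only [ech, Function.comp]
    congr 2
    simp [L, Finset.mul_sum, mul_assoc]
  rw [this]
  exact expI_temperate.comp L.hasTemperateGrowth

lemma dila_tran_pair {n : ℕ} (M : Matrix (Fin n) (Fin n) ℝ) (hM : M.det ≠ 0) (y : ℝn n)
    {g gh : ℝn n → ℂ} (h : IsFourierPair gh g) :
    IsFourierPair (fun ξ => ((Real.sqrt |M.det|)⁻¹ : ℝ) *
      (ech y ((M.transpose⁻¹).mulVec ξ) * gh ((M.transpose⁻¹).mulVec ξ)))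
      (dila M (tran y g)) := by
  intro s
  have hMt : M.transpose.det ≠ 0 := by rwa [Matrix.det_transpose]
  have hMi : (M.transpose⁻¹).det ≠ 0 := by
    rw [Matrix.det_nonsing_inv]; simpa using hM
  set c : ℝ := Real.sqrt |M.det| with hc
  have hcpos : 0 < c := Real.sqrt_pos.2 (abs_pos.2 hM)
  have hcc : c * c = |M.det| := Real.mul_self_sqrt (abs_nonneg _)
  let s' : SchwartzMap (ℝn n) ℂ := SchwartzMap.smulLeftCLM ℂ (ech y)
    (SchwartzMap.compCLMOfContinuousLinearEquiv ℂ (mvE _ hMt) s)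
  have hs' : ∀ x, s' x = ech y x * s (M.transpose.mulVec x) := by
    intro x
    simp only [s']
    rw [SchwartzMap.smulLeftCLM_apply_apply (ech_temperate y)]
    simp [mvE_apply]
  have e1 : ∫ ξ : ℝn n, ((c⁻¹ : ℝ) * (ech y ((M.transpose⁻¹).mulVec ξ) *
      gh ((M.transpose⁻¹).mulVec ξ))) * s ξ = c * ∫ x, gh x * s' x := by
    have : ∀ ξ : ℝn n, ((c⁻¹ : ℝ) * (ech y ((M.transpose⁻¹).mulVec ξ) *
      gh ((M.transpose⁻¹).mulVec ξ))) * s ξ =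
      (fun η => ((c⁻¹ : ℝ) : ℂ) * (gh η * s' η)) ((M.transpose⁻¹).mulVec ξ) := by
      intro ξ
      simp only [hs']
      rw [Matrix.mulVec_mulVec, Matrix.mul_nonsing_inv _ (isUnit_iff_ne_zero.2 hMt),
        Matrix.one_mulVec]
      ring
    simp_rw [this]
    rw [integral_mulVec _ hMi (fun η => ((c⁻¹ : ℝ) : ℂ) * (gh η * s' η)), integral_const_mul,
      ← mul_assoc]
    congr 1
    rw [Matrix.det_nonsing_inv, Matrix.det_transpose, Ring.inverse_eq_inv', abs_inv, inv_inv, ← hcc]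
    push_cast
    field_simp
  have e2 : ∀ z, ftrans (fun y => s y) z = |M.det| * ftrans (fun y => s' y) (M.mulVec z - y) := by
    intro z
    have : ∀ η, Complex.exp (-(2 * Real.pi * (∑ i, (M.mulVec z - y) i * η i)) * Complex.I) *
        s' η = (fun x => ech z x * s x) (M.transpose.mulVec η) := by
      intro η
      change ech (M.mulVec z - y) η * s' η = ech z _ * s _
      rw [hs', ← mul_assoc, ← ech_add_left, sub_add_cancel, ech_mulVec]
    have e3 : ftrans (fun y => s' y) (M.mulVec z - y) =
        ∫ η, (fun x => ech z x * s x) (M.transpose.mulVec η) := by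
      unfold ftrans
      congr 1
      ext η
      exact this η
    rw [e3, integral_mulVec _ hMt (fun x => ech z x * s x), ← mul_assoc, Matrix.det_transpose,
      ← ofReal_mul, mul_inv_cancel₀ (abs_pos.2 hM).ne', ofReal_one, one_mul]
    rfl
  rw [e1, h s']
  have : ∀ z, dila M (tran y g) z * ftrans (fun y => s y) z =
      (fun x => (c * |M.det| : ℂ) * ((fun x => g x * ftrans (fun y => s' y) x) (x - y)))
      (M.mulVec z) := by
    intro z
    rw [e2]
    simp only [dila, tran, ← hc]
    ring
  simp_rw [this]
  rw [integral_mulVec _ hM (fun x => (c * |M.det| : ℂ) * ((fun x => g x * ftrans (fun y => s' y) x) (x - y))),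
    integral_const_mul, integral_sub_right_eq_self (fun x => g x * ftrans (fun y => s' y) x)]
  rw [← mul_assoc]
  congr 1
  have : ((|M.det| : ℝ) : ℂ) ≠ 0 := by exact_mod_cast (abs_pos.2 hM).ne'
  push_cast
  field_simp


section torus

local instance torusMeasureSpace : MeasureSpace UnitAddCircle := ⟨AddCircle.haarAddCircle⟩

/-- periodization of a function supported in the cube -/
def perio {n : ℕ} (u : ℝn n → ℂ) : UnitAddTorus (Fin n) → ℂ :=
  fun t => u ((-2 : ℝ) • (UnitAddTorus.measurableEquivPiIoc (fun _ => (-1/2 : ℝ)) t).1)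

def cubeS (n : ℕ) : Set (ℝn n) := {x | ∀ i, x i ∈ Ioc (-1/2 : ℝ) (-1/2 + 1)}

lemma perio_coe {n : ℕ} (u : ℝn n → ℂ) (x : ℝn n) (hx : x ∈ cubeS n) :
    perio u (fun i => (x i : UnitAddCircle)) = u ((-2 : ℝ) • x) := by
  have := (UnitAddTorus.measurableEquivPiIoc (fun _ : Fin n => (-1/2 : ℝ))).apply_symm_apply ⟨x, hx⟩
  rw [UnitAddTorus.coe_symm_measurableEquivPiIoc_apply] at this
  unfold perio
  rw [this]

lemma cubeS_meas (n : ℕ) : MeasurableSet (cubeS n) :=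
  MeasurableSet.univ_pi' (fun _ => measurableSet_Ioc)

lemma perio_memLp {n : ℕ} {u : ℝn n → ℂ} (hu : MemLp u 2 volume) :
    MemLp (perio u) 2 (volume : Measure (UnitAddTorus (Fin n))) := by
  have hu2 : MemLp (fun x : ℝn n => u ((-2 : ℝ) • x)) 2 volume := by
    have := memLp_mulVec ((-2 : ℝ) • (1 : Matrix (Fin n) (Fin n) ℝ)) (by
      rw [Matrix.det_smul]; simp) hu
    simpa only [Matrix.smul_mulVec, Matrix.one_mulVec] using this
  have h1 : MemLp (fun x : cubeS n => u ((-2 : ℝ) • x.1)) 2 (Measure.comap Subtype.val volume) := by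
    have := (MeasurableEmbedding.subtype_coe (cubeS_meas n)).memLp_map_measure_iff
      (g := fun x : ℝn n => u ((-2 : ℝ) • x)) (μ := Measure.comap Subtype.val volume) (p := 2)
    refine this.1 ?_
    rw [map_comap_subtype_coe (cubeS_meas n)]
    exact hu2.restrict _
  exact h1.comp_measurePreserving (UnitAddTorus.measurePreserving_equivPiIoc (fun _ => (-1/2 : ℝ)))

lemma integral_perio {n : ℕ} (H : UnitAddTorus (Fin n) → ℂ) (K : ℝn n → ℂ)
    (hHK : ∀ x ∈ cubeS n, H (fun i => (x i : UnitAddCircle)) = K ((-2 : ℝ) • x))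
    (hK : ∀ x, K x ≠ 0 → ∀ i, |x i| < 1) :
    ∫ t, H t = ((2 : ℂ) ^ n)⁻¹ * ∫ x, K x := by
  rw [UnitAddTorus.integral_preimage H (fun _ => (-1/2 : ℝ))]
  change ∫ x in cubeS n, _ = _
  rw [setIntegral_congr_fun (cubeS_meas n) (g := fun x => K ((-2 : ℝ) • x)) hHK]
  rw [setIntegral_eq_integral_of_forall_compl_eq_zero]
  · rw [Measure.integral_comp_smul]
    simp [abs_pow]
  · intro x hx
    by_contra h
    apply hx
    intro i
    have := hK _ h i
    rw [abs_lt] at this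
    simp only [Pi.smul_apply, smul_eq_mul] at this
    constructor <;> linarith [this.1, this.2]

lemma mFourier_ech {n : ℕ} (k : Fin n → ℤ) (x : ℝn n) :
    UnitAddTorus.mFourier (-k) (fun i => (x i : UnitAddCircle)) =
      conj (ech ((2⁻¹ : ℝ) • ivec k) ((-2 : ℝ) • x)) := by
  simp only [UnitAddTorus.mFourier, ContinuousMap.coe_mk, fourier_coe_apply, ech]
  rw [← Complex.exp_sum, ← Complex.exp_conj]
  congr 1
  simp [ivec, Finset.mul_sum, Finset.sum_mul]
  refine Finset.sum_congr rfl fun i _ => ?_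
  rw [Complex.conj_ofNat]
  ring

lemma cube_parseval {n : ℕ} {u v : ℝn n → ℂ} (hu : MemLp u 2 volume) (hv : MemLp v 2 volume)
    (hu0 : ∀ x, u x ≠ 0 → ∀ i, |x i| < 1) (hv0 : ∀ x, v x ≠ 0 → ∀ i, |x i| < 1) :
    HasSum (fun k : Fin n → ℤ =>
      conj (∫ x, conj (ech ((2⁻¹ : ℝ) • ivec k) x) * u x) *
        (∫ x, conj (ech ((2⁻¹ : ℝ) • ivec k) x) * v x))
      (2 ^ n * ∫ x, conj (u x) * v x) := by
  have hc : ∀ (w : ℝn n → ℂ) (hw : MemLp w 2 volume) (hw0 : ∀ x, w x ≠ 0 → ∀ i, |x i| < 1)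
      (k : Fin n → ℤ), UnitAddTorus.mFourierCoeff ((perio_memLp hw).toLp (perio w)) k =
        ((2 : ℂ) ^ n)⁻¹ * ∫ x, conj (ech ((2⁻¹ : ℝ) • ivec k) x) * w x := by
    intro w hw hw0 k
    unfold UnitAddTorus.mFourierCoeff
    rw [integral_congr_ae (g := fun t => UnitAddTorus.mFourier (-k) t • perio w t)]
    · apply integral_perio
      · intro x hx
        simp only [smul_eq_mul]
        rw [perio_coe w x hx, mFourier_ech]
      · intro x hx
        exact hw0 x (right_ne_zero_of_mul hx)
    · filter_upwards [(perio_memLp hw).coeFn_toLp] with t ht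
      rw [ht]
  have key := UnitAddTorus.hasSum_prod_mFourierCoeff ((perio_memLp hu).toLp (perio u))
    ((perio_memLp hv).toLp (perio v))
  have hI : ∫ t, conj (((perio_memLp hu).toLp (perio u)) t) * ((perio_memLp hv).toLp (perio v)) t =
      ((2 : ℂ) ^ n)⁻¹ * ∫ x, conj (u x) * v x := by
    rw [integral_congr_ae (g := fun t => conj (perio u t) * perio v t)]
    · apply integral_perio
      · intro x hx
        rw [perio_coe u x hx, perio_coe v x hx]
      · intro x hx
        exact hv0 x (right_ne_zero_of_mul hx)
    · filter_upwards [(perio_memLp hu).coeFn_toLp, (perio_memLp hv).coeFn_toLp] with t ht ht'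
      rw [ht, ht']
  rw [hI] at key
  simp only [hc u hu hu0, hc v hv hv0] at key
  have key2 := key.mul_left ((2 : ℂ) ^ n * 2 ^ n)
  have h2 : (2 : ℂ) ^ n ≠ 0 := by simp
  have h3 : conj (2 : ℂ) = 2 := Complex.conj_ofNat 2
  have e1 : ∀ a b : ℂ, (2 : ℂ) ^ n * 2 ^ n * (conj (((2 : ℂ) ^ n)⁻¹ * a) * (((2 : ℂ) ^ n)⁻¹ * b)) =
      conj a * b := by
    intro a b
    rw [map_mul, map_inv₀, map_pow, h3]
    field_simp
  have e2 : ∀ a : ℂ, (2 : ℂ) ^ n * 2 ^ n * (((2 : ℂ) ^ n)⁻¹ * a) = 2 ^ n * a := by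
    intro a
    field_simp
  simpa only [e1, e2] using key2

end torus


lemma memLp_tran {n : ℕ} (y : ℝn n) {g : ℝn n → ℂ} (hg : MemLp g 2 volume) :
    MemLp (tran y g) 2 volume :=
  hg.comp_measurePreserving (measurePreserving_sub_right volume y)

lemma memLp_dila {n : ℕ} (M : Matrix (Fin n) (Fin n) ℝ) (hM : M.det ≠ 0) {g : ℝn n → ℂ}
    (hg : MemLp g 2 volume) : MemLp (dila M g) 2 volume :=
  (memLp_mulVec M hM hg).const_mul _

lemma memLp_ech_mul {n : ℕ} (y : ℝn n) {g : ℝn n → ℂ} (hg : MemLp g 2 volume) :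
    MemLp (fun x => ech y x * g x) 2 volume := by
  refine hg.mono ((continuous_ech y).aestronglyMeasurable.mul hg.1) (.of_forall fun x => ?_)
  rw [norm_mul, norm_ech, one_mul]

lemma det_tinv {n : ℕ} (M : Matrix (Fin n) (Fin n) ℝ) (hM : M.det ≠ 0) :
    (M.transpose⁻¹).det ≠ 0 := by
  rw [Matrix.det_nonsing_inv]; simpa using hM

lemma ip_level {n : ℕ} (M : Matrix (Fin n) (Fin n) ℝ) (hM : M.det ≠ 0) (y : ℝn n)
    {f fh α : ℝn n → ℂ} {a : ℝn n → ℝ}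
    (hf : MemLp f 2 volume) (hfh : MemLp fh 2 volume) (hp : IsFourierPair fh f)
    (hα : MemLp α 2 volume) (ha : MemLp (fun x => (a x : ℂ)) 2 volume)
    (hpa : IsFourierPair (fun x => (a x : ℂ)) α) :
    ip f (dila M (tran y α)) =
      ∫ η, conj (ech y η) * ((Real.sqrt |M.det| : ℂ) * (a η * fh (M.transpose.mulVec η))) := by
  have hMt : M.transpose.det ≠ 0 := by rwa [Matrix.det_transpose]
  rw [ip_eq_ip_hat hf hfh (memLp_dila M hM (memLp_tran y hα))
    ((memLp_mulVec _ (det_tinv M hM) (memLp_ech_mul y ha)).const_mul _) hp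
    (dila_tran_pair M hM y hpa)]
  set c : ℝ := Real.sqrt |M.det| with hc
  have hcpos : 0 < c := Real.sqrt_pos.2 (abs_pos.2 hM)
  have hcc : c * c = |M.det| := Real.mul_self_sqrt (abs_nonneg _)
  have e1 := integral_mulVec M.transpose hMt (fun ξ => fh ξ * conj (((c⁻¹ : ℝ) : ℂ) *
      (ech y ((M.transpose⁻¹).mulVec ξ) * a ((M.transpose⁻¹).mulVec ξ))))
  rw [Matrix.det_transpose] at e1
  have e2 : ip fh (fun ξ => ((c⁻¹ : ℝ) : ℂ) *
      (ech y ((M.transpose⁻¹).mulVec ξ) * a ((M.transpose⁻¹).mulVec ξ))) =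
      (c * c : ℂ) * ∫ η, fh (M.transpose.mulVec η) * conj (((c⁻¹ : ℝ) : ℂ) *
      (ech y η * a η)) := by
    have : (c : ℂ) ≠ 0 := by exact_mod_cast hcpos.ne'
    simp only [Matrix.mulVec_mulVec, Matrix.nonsing_inv_mul _ (isUnit_iff_ne_zero.2 hMt),
      Matrix.one_mulVec] at e1
    rw [e1, ← hcc, ip]
    push_cast
    field_simp
  rw [e2, ← integral_const_mul]
  congr 1
  ext η
  have : (c : ℂ) ≠ 0 := by exact_mod_cast hcpos.ne'
  simp only [map_mul, Complex.conj_ofReal]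
  push_cast
  field_simp

lemma memLp_window {n : ℕ} (M : Matrix (Fin n) (Fin n) ℝ) (hM : M.det ≠ 0) {fh : ℝn n → ℂ}
    (hfh : MemLp fh 2 volume) {a : ℝn n → ℝ} (hac : Continuous a) (ha1 : ∀ x, |a x| ≤ 1) (c : ℂ) :
    MemLp (fun η => c * (a η * fh (M.mulVec η))) 2 volume := by
  refine MemLp.const_mul ?_ c
  have h1 := memLp_mulVec M hM hfh
  refine h1.mono ((Complex.continuous_ofReal.comp hac).aestronglyMeasurable.mul h1.1)
    (.of_forall fun x => ?_)
  simp only [norm_mul, Complex.norm_real, Real.norm_eq_abs]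
  exact mul_le_of_le_one_left (norm_nonneg _) (ha1 x)

/-- data of a window function -/
structure IsWindow {n : ℕ} (a : ℝn n → ℝ) (α : ℝn n → ℂ) : Prop where
  cont : Continuous a
  bd : ∀ x, |a x| ≤ 1
  supp : ∀ x, a x ≠ 0 → ∀ i, |x i| < 1
  memα : MemLp α 2 volume
  mema : MemLp (fun x => (a x : ℂ)) 2 volume
  pair : IsFourierPair (fun x => (a x : ℂ)) α

lemma level_hasSum {n : ℕ} (M : Matrix (Fin n) (Fin n) ℝ) (hM : M.det ≠ 0)
    {f fh h hh α β : ℝn n → ℂ} {a b : ℝn n → ℝ}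
    (hf : MemLp f 2 volume) (hfh : MemLp fh 2 volume) (hp : IsFourierPair fh f)
    (hh1 : MemLp h 2 volume) (hhh : MemLp hh 2 volume) (hp' : IsFourierPair hh h)
    (wa : IsWindow a α) (wb : IsWindow b β) :
    HasSum (fun k : Fin n → ℤ =>
      conj (ip f (dila M (tran ((2⁻¹ : ℝ) • ivec k) α))) *
        ip h (dila M (tran ((2⁻¹ : ℝ) • ivec k) β)))
      (2 ^ n * ∫ ξ, conj (fh ξ) * hh ξ *
        ((a ((M.transpose⁻¹).mulVec ξ) * b ((M.transpose⁻¹).mulVec ξ) : ℝ) : ℂ)) := by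
  have hMt : M.transpose.det ≠ 0 := by rwa [Matrix.det_transpose]
  have key := cube_parseval (memLp_window _ hMt hfh wa.cont wa.bd (Real.sqrt |M.det| : ℂ))
    (memLp_window _ hMt hhh wb.cont wb.bd (Real.sqrt |M.det| : ℂ))
    (fun x hx => wa.supp x (by intro h0; simp [h0] at hx))
    (fun x hx => wb.supp x (by intro h0; simp [h0] at hx))
  simp_rw [← ip_level M hM _ hf hfh hp wa.memα wa.mema wa.pair,
    ← ip_level M hM _ hh1 hhh hp' wb.memα wb.mema wb.pair] at key
  convert key using 2
  have e1 := integral_mulVec M.transpose hMt (fun ξ => conj (fh ξ) * hh ξ *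
        ((a ((M.transpose⁻¹).mulVec ξ) * b ((M.transpose⁻¹).mulVec ξ) : ℝ) : ℂ))
  simp only [Matrix.mulVec_mulVec, Matrix.nonsing_inv_mul _ (isUnit_iff_ne_zero.2 hMt),
      Matrix.one_mulVec, Matrix.det_transpose] at e1
  have hne : ((|M.det| : ℝ) : ℂ) ≠ 0 := by exact_mod_cast (abs_pos.2 hM).ne'
  have e2 : ∫ ξ, conj (fh ξ) * hh ξ *
        ((a ((M.transpose⁻¹).mulVec ξ) * b ((M.transpose⁻¹).mulVec ξ) : ℝ) : ℂ) =
      ((|M.det| : ℝ) : ℂ) * ∫ x, conj (fh (M.transpose.mulVec x)) * hh (M.transpose.mulVec x) *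
        ((a x * b x : ℝ) : ℂ) := by
    rw [e1]
    push_cast
    field_simp
  rw [e2, ← integral_const_mul]
  congr 1
  ext x
  have hcc : ((Real.sqrt |M.det| : ℝ) : ℂ) * ((Real.sqrt |M.det| : ℝ) : ℂ) = ((|M.det| : ℝ) : ℂ) := by
    rw [← ofReal_mul, Real.mul_self_sqrt (abs_nonneg _)]
  rw [← hcc]
  simp only [map_mul, Complex.conj_ofReal]
  push_cast
  ring

lemma ip_self_lintegral {n : ℕ} {f : ℝn n → ℂ} (hf : MemLp f 2 volume) :
    ENNReal.ofReal (ip f f).re = ∫⁻ x, (‖f x‖₊ : ℝ≥0∞) ^ 2 := by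
  have h1 : ip f f = ((∫ x, ‖f x‖ ^ 2 : ℝ) : ℂ) := by
    rw [ip, ← integral_complex_ofReal]
    congr 1
    ext x
    rw [Complex.mul_conj, Complex.normSq_eq_norm_sq]
  rw [h1, Complex.ofReal_re, ofReal_integral_eq_lintegral_ofReal]
  · congr 1
    ext x
    rw [ENNReal.ofReal_pow (norm_nonneg _), ofReal_norm]
    rfl
  · exact hf.integrable_norm_pow (by norm_num)
  · exact .of_forall fun x => by positivity

lemma level_bessel {n : ℕ} (M : Matrix (Fin n) (Fin n) ℝ) (hM : M.det ≠ 0)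
    {f fh α : ℝn n → ℂ} {a : ℝn n → ℝ}
    (hf : MemLp f 2 volume) (hfh : MemLp fh 2 volume) (hp : IsFourierPair fh f)
    (wa : IsWindow a α) :
    ∑' k : Fin n → ℤ, (‖ip f (dila M (tran ((2⁻¹ : ℝ) • ivec k) α))‖₊ : ℝ≥0∞) ^ 2 =
      2 ^ n * ∫⁻ ξ, (‖fh ξ‖₊ : ℝ≥0∞) ^ 2 * ENNReal.ofReal (a ((M.transpose⁻¹).mulVec ξ) ^ 2) := by
  have key := level_hasSum M hM hf hfh hp hf hfh hp wa wa
  have hint : Integrable (fun ξ => ‖fh ξ‖ ^ 2 * a ((M.transpose⁻¹).mulVec ξ) ^ 2) := by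
    refine (hfh.integrable_norm_pow (p := 2) (by norm_num)).mul_bdd (c := 1) ?_ (.of_forall fun x => ?_)
    · exact ((wa.cont.comp (mvE _ (det_tinv M hM)).continuous).pow 2 |>.aestronglyMeasurable).congr
        (.of_forall fun x => by simp [mvE_apply])
    · rw [Real.norm_eq_abs, abs_pow]
      exact pow_le_one₀ (abs_nonneg _) (wa.bd _)
  have e1 : (2 ^ n * ∫ ξ, conj (fh ξ) * fh ξ *
        ((a ((M.transpose⁻¹).mulVec ξ) * a ((M.transpose⁻¹).mulVec ξ) : ℝ) : ℂ)) =
      ((2 ^ n * ∫ ξ, ‖fh ξ‖ ^ 2 * a ((M.transpose⁻¹).mulVec ξ) ^ 2 : ℝ) : ℂ) := by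
    push_cast
    rw [← integral_complex_ofReal]
    congr 2
    ext ξ
    rw [mul_comm (conj _), Complex.mul_conj, Complex.normSq_eq_norm_sq]
    push_cast
    ring
  rw [e1] at key
  have e2 : ∀ z : ℂ, conj z * z = ((‖z‖ ^ 2 : ℝ) : ℂ) := by
    intro z
    rw [mul_comm (conj _), Complex.mul_conj, Complex.normSq_eq_norm_sq]
  simp_rw [e2] at key
  rw [Complex.hasSum_ofReal] at key
  have e3 : ∀ z : ℂ, (‖z‖₊ : ℝ≥0∞) ^ 2 = ENNReal.ofReal (‖z‖ ^ 2) := by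
    intro z
    rw [ENNReal.ofReal_pow (norm_nonneg _), ofReal_norm]
    rfl
  simp_rw [e3]
  rw [← ENNReal.ofReal_tsum_of_nonneg (fun _ => by positivity) key.summable, key.tsum_eq,
    ENNReal.ofReal_mul (by positivity), ofReal_integral_eq_lintegral_ofReal hint
      (.of_forall fun x => by positivity)]
  congr 1
  · rw [ENNReal.ofReal_pow (by norm_num)]; simp
  · congr 1
    ext ξ
    rw [ENNReal.ofReal_mul (by positivity)]


open FourierTransform SchwartzMap in
lemma ftrans_memLp {n : ℕ} (s : SchwartzMap (ℝn n) ℂ) :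
    MemLp (ftrans (fun y => s y)) 2 volume := by
  let s' := compCLMOfContinuousLinearEquiv ℂ (EuclideanSpace.equiv (Fin n) ℝ) s
  have h : ftrans (fun y => s y) = fun x => (𝓕 s') (WithLp.toLp 2 x) := by
    ext x
    exact ftrans_eq_fourier s' _ (fun _ => rfl) x
  rw [h]
  exact ((𝓕 s').memLp 2 volume).comp_measurePreserving (PiLp.volume_preserving_toLp (Fin n))

lemma IsFourierPair.smul {n : ℕ} {g gh : ℝn n → ℂ} (h : IsFourierPair gh g) (c : ℂ) :
    IsFourierPair (fun x => c * gh x) (fun x => c * g x) := by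
  intro s
  simp_rw [mul_assoc]
  rw [integral_const_mul, integral_const_mul, h s]

lemma IsFourierPair.add {n : ℕ} {g gh f fh : ℝn n → ℂ} (h : IsFourierPair gh g)
    (h' : IsFourierPair fh f) (m1 : MemLp g 2 volume) (m2 : MemLp gh 2 volume)
    (m3 : MemLp f 2 volume) (m4 : MemLp fh 2 volume) :
    IsFourierPair (fun x => gh x + fh x) (fun x => g x + f x) := by
  intro s
  simp_rw [add_mul]
  have hs : MemLp (fun x => s x) 2 volume := s.memLp 2 volume
  have i1 : Integrable (fun x => gh x * s x) := m2.integrable_mul hs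
  have i2 : Integrable (fun x => fh x * s x) := m4.integrable_mul hs
  have i3 : Integrable (fun x => g x * ftrans (fun y => s y) x) :=
    m1.integrable_mul (ftrans_memLp s)
  have i4 : Integrable (fun x => f x * ftrans (fun y => s y) x) :=
    m3.integrable_mul (ftrans_memLp s)
  rw [integral_add i1 i2, integral_add i3 i4, h s, h' s]

lemma pair_mulVec {n : ℕ} (M : Matrix (Fin n) (Fin n) ℝ) (hM : M.det ≠ 0)
    {g gh : ℝn n → ℂ} (h : IsFourierPair gh g) :
    IsFourierPair (fun ξ => ((|M.det|⁻¹ : ℝ) : ℂ) * gh ((M.transpose⁻¹).mulVec ξ))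
      (fun x => g (M.mulVec x)) := by
  have h1 := (dila_tran_pair M hM 0 h).smul (((Real.sqrt |M.det|)⁻¹ : ℝ) : ℂ)
  have hcpos : 0 < Real.sqrt |M.det| := Real.sqrt_pos.2 (abs_pos.2 hM)
  have hcc : Real.sqrt |M.det| * Real.sqrt |M.det| = |M.det| := Real.mul_self_sqrt (abs_nonneg _)
  have : ((Real.sqrt |M.det| : ℝ) : ℂ) ≠ 0 := by exact_mod_cast hcpos.ne'
  convert h1 using 2 with ξ x
  · rw [← mul_assoc, ← ofReal_mul, ← mul_inv, hcc]
    simp [ech]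
  · simp only [dila, tran, sub_zero]
    push_cast
    field_simp

/-- the cut-off profile -/
def Theta (ξ : ℝn 2) : ℝ := max 0 (min 1 (2 - 2 * ‖ξ‖))

def Bm : Matrix (Fin 2) (Fin 2) ℝ := !![1, 1; -1, 1]

lemma norm_two (x : ℝn 2) : ‖x‖ = max |x 0| |x 1| := by
  apply le_antisymm
  · rw [pi_norm_le_iff_of_nonneg (le_max_of_le_left (abs_nonneg _))]
    intro i
    fin_cases i <;> simp
  · exact max_le (by simpa using norm_le_pi_norm x 0) (by simpa using norm_le_pi_norm x 1)

lemma Bm_zero (x : ℝn 2) : Bm.mulVec x 0 = x 0 + x 1 := by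
  simp [Bm, Matrix.mulVec, dotProduct]

lemma Bm_one (x : ℝn 2) : Bm.mulVec x 1 = -x 0 + x 1 := by
  simp [Bm, Matrix.mulVec, dotProduct]

lemma norm_Bm (x : ℝn 2) : ‖Bm.mulVec x‖ = |x 0| + |x 1| := by
  rw [norm_two, Bm_zero, Bm_one]
  rcases abs_cases (x 0) with h0 | h0 <;> rcases abs_cases (x 1) with h1 | h1 <;>
  rcases abs_cases (x 0 + x 1) with h2 | h2 <;> rcases abs_cases (-x 0 + x 1) with h3 | h3 <;>
  rcases max_cases (|x 0 + x 1|) (|-x 0 + x 1|) with h4 | h4 <;> linarith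

lemma norm_Bm_Bm (x : ℝn 2) : ‖Bm.mulVec (Bm.mulVec x)‖ = 2 * ‖x‖ := by
  rw [norm_Bm, Bm_zero, Bm_one, norm_two]
  rcases abs_cases (x 0) with h0 | h0 <;> rcases abs_cases (x 1) with h1 | h1 <;>
  rcases abs_cases (x 0 + x 1) with h2 | h2 <;> rcases abs_cases (-x 0 + x 1) with h3 | h3 <;>
  rcases max_cases (|x 0|) (|x 1|) with h4 | h4 <;> linarith

lemma norm_le_Bm (x : ℝn 2) : ‖x‖ ≤ ‖Bm.mulVec x‖ := by
  rw [norm_Bm, norm_two]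
  exact max_le (by linarith [abs_nonneg (x 1)]) (by linarith [abs_nonneg (x 0)])

lemma psiHat_eq (x : ℝn 2) : quincunxPsiHat x = Theta x - Theta (Bm.mulVec x) := by
  rw [Theta, Theta, norm_Bm, norm_two, quincunxPsiHat, tentG]
  have h0 := abs_nonneg (x 0)
  have h1 := abs_nonneg (x 1)
  generalize |x 0| = a at *
  generalize |x 1| = b at *
  have hT : ∀ t : ℝ, (t ≤ 1 / 2 ∧ max 0 (min 1 (2 - 2 * t)) = 1) ∨
      (1 / 2 ≤ t ∧ t ≤ 1 ∧ max 0 (min 1 (2 - 2 * t)) = 2 - 2 * t) ∨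
      (1 < t ∧ max 0 (min 1 (2 - 2 * t)) = 0) := by
    intro t
    rcases le_or_gt t (1 / 2) with h | h
    · left
      rw [min_eq_left (by linarith), max_eq_right (by norm_num)]
      exact ⟨h, rfl⟩
    · rcases le_or_gt t 1 with h' | h'
      · right; left
        rw [min_eq_right (by linarith), max_eq_right (by linarith)]
        exact ⟨h.le, h', rfl⟩
      · right; right
        rw [min_eq_right (by linarith), max_eq_left (by linarith)]
        exact ⟨h', rfl⟩
  have e1 := hT (max a b)
  have e2 := hT (a + b)
  generalize max 0 (min 1 (2 - 2 * max a b)) = T1 at *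
  generalize max 0 (min 1 (2 - 2 * (a + b))) = T2 at *
  clear hT
  rcases le_total a b with h4 | h4
  · rw [max_eq_right h4] at e1
    split_ifs <;> grind
  · rw [max_eq_left h4] at e1
    split_ifs <;> grind

lemma Theta_nonneg (x : ℝn 2) : 0 ≤ Theta x := le_max_left _ _

lemma Theta_le_one (x : ℝn 2) : Theta x ≤ 1 := max_le zero_le_one (min_le_left _ _)

lemma Theta_anti {x y : ℝn 2} (h : ‖x‖ ≤ ‖y‖) : Theta y ≤ Theta x := by
  unfold Theta
  gcongr

lemma Theta_eq_one {x : ℝn 2} (h : ‖x‖ ≤ 1 / 2) : Theta x = 1 := by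
  unfold Theta
  rw [min_eq_left (by linarith)]
  simp

lemma Theta_eq_zero {x : ℝn 2} (h : 1 ≤ ‖x‖) : Theta x = 0 := by
  unfold Theta
  rw [max_eq_left]
  exact (min_le_right _ _).trans (by linarith)

lemma Theta_cont : Continuous Theta := by
  unfold Theta; fun_prop

lemma Bm_cont : Continuous (fun x : ℝn 2 => Bm.mulVec x) := by
  fun_prop

/-- the window of `φ` -/
def phiHat (x : ℝn 2) : ℝ := (1 / 4) * quincunxPsiHat x +
  ((1 / 2) * quincunxPsiHat (Bm.mulVec x) + (1 / 2) * quincunxPsiHat (Bm.mulVec (Bm.mulVec x)))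

/-- the telescoping term -/
def tele (x : ℝn 2) : ℝ := Theta x ^ 2 - Theta (Bm.mulVec x) ^ 2

lemma tele_nonneg (x : ℝn 2) : 0 ≤ tele x := by
  have h := Theta_anti (norm_le_Bm x)
  have h2 := Theta_nonneg (Bm.mulVec x)
  unfold tele
  nlinarith

lemma psi_mul_phi (x : ℝn 2) : 4 * (phiHat x * quincunxPsiHat x) = tele x := by
  unfold phiHat tele
  rw [psiHat_eq, psiHat_eq, psiHat_eq]
  by_cases h : ‖Bm.mulVec x‖ ≤ 1 / 2
  · rw [Theta_eq_one h, Theta_eq_one ((norm_le_Bm x).trans h)]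
    ring
  · have : Theta (Bm.mulVec (Bm.mulVec (Bm.mulVec x))) = 0 := by
      apply Theta_eq_zero
      rw [norm_Bm_Bm]
      linarith
    rw [this]
    ring

lemma psi_sq_le (x : ℝn 2) : quincunxPsiHat x ^ 2 ≤ tele x := by
  rw [psiHat_eq, tele]
  have h := Theta_anti (norm_le_Bm x)
  have h2 := Theta_nonneg (Bm.mulVec x)
  nlinarith

lemma phi_sq_le (x : ℝn 2) : phiHat x ^ 2 ≤
    tele x + tele (Bm.mulVec x) + tele (Bm.mulVec (Bm.mulVec x)) := by
  have h1 := Theta_anti (norm_le_Bm x)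
  have h2 := Theta_anti (norm_le_Bm (Bm.mulVec x))
  have h3 := Theta_anti (norm_le_Bm (Bm.mulVec (Bm.mulVec x)))
  have h4 := Theta_nonneg (Bm.mulVec (Bm.mulVec (Bm.mulVec x)))
  have h5 : 0 ≤ phiHat x := by
    unfold phiHat; rw [psiHat_eq, psiHat_eq, psiHat_eq]; linarith
  have h6 : phiHat x ≤ Theta x - Theta (Bm.mulVec (Bm.mulVec (Bm.mulVec x))) := by
    unfold phiHat; rw [psiHat_eq, psiHat_eq, psiHat_eq]; linarith
  unfold tele
  nlinarith

lemma psi_cont : Continuous quincunxPsiHat := by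
  rw [show quincunxPsiHat = fun x => Theta x - Theta (Bm.mulVec x) from funext psiHat_eq]
  exact Theta_cont.sub (Theta_cont.comp Bm_cont)

lemma phi_cont : Continuous phiHat := by
  have h := Bm_cont
  have h1 := psi_cont.comp h
  have h2 := h1.comp h
  exact (continuous_const.mul psi_cont).add ((continuous_const.mul h1).add (continuous_const.mul h2))

lemma psi_zero {x : ℝn 2} (h : 1 ≤ ‖x‖) : quincunxPsiHat x = 0 := by
  rw [psiHat_eq, Theta_eq_zero h, Theta_eq_zero (h.trans (norm_le_Bm x)), sub_zero]

lemma phi_zero {x : ℝn 2} (h : 1 ≤ ‖x‖) : phiHat x = 0 := by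
  have h1 := h.trans (norm_le_Bm x)
  rw [phiHat, psi_zero h, psi_zero h1, psi_zero (h1.trans (norm_le_Bm _))]
  ring

lemma psi_bd (x : ℝn 2) : |quincunxPsiHat x| ≤ 1 := by
  rw [psiHat_eq, abs_le]
  constructor <;> linarith [Theta_nonneg x, Theta_nonneg (Bm.mulVec x), Theta_le_one x,
    Theta_le_one (Bm.mulVec x)]

lemma phi_bd (x : ℝn 2) : |phiHat x| ≤ 1 := by
  have h1 := Theta_anti (norm_le_Bm x)
  have h2 := Theta_anti (norm_le_Bm (Bm.mulVec x))
  have h3 := Theta_anti (norm_le_Bm (Bm.mulVec (Bm.mulVec x)))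
  have h4 := Theta_nonneg (Bm.mulVec (Bm.mulVec (Bm.mulVec x)))
  have h5 := Theta_le_one x
  unfold phiHat
  rw [psiHat_eq, psiHat_eq, psiHat_eq, abs_le]
  constructor <;> linarith

lemma supp_of_norm {a : ℝn 2 → ℝ} (h : ∀ x, 1 ≤ ‖x‖ → a x = 0) (x : ℝn 2) (hx : a x ≠ 0)
    (i : Fin 2) : |x i| < 1 := by
  have : ‖x‖ < 1 := by
    by_contra hc
    exact hx (h x (not_lt.1 hc))
  exact (norm_le_pi_norm x i).trans_lt this

lemma memLp_of_norm {a : ℝn 2 → ℝ} (hc : Continuous a) (h : ∀ x, 1 ≤ ‖x‖ → a x = 0) :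
    MemLp (fun x => (a x : ℂ)) 2 volume := by
  refine Continuous.memLp_of_hasCompactSupport (Complex.continuous_ofReal.comp hc) ?_
  refine HasCompactSupport.of_support_subset_isCompact (isCompact_closedBall (0 : ℝn 2) 1) ?_
  intro x hx
  by_contra hc
  apply hx
  have : 1 ≤ ‖x‖ := by
    rw [mem_closedBall_zero_iff, not_le] at hc
    exact hc.le
  simp [h x this]

lemma psi_window {ψ : ℝn 2 → ℂ} (hψ : MemLp ψ 2 volume)
    (hhat : IsFourierPair (fun ξ => (quincunxPsiHat ξ : ℂ)) ψ) : IsWindow quincunxPsiHat ψ :=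
  ⟨psi_cont, psi_bd, supp_of_norm fun _ => psi_zero, hψ,
    memLp_of_norm psi_cont fun _ => psi_zero, hhat⟩


/-- the quincunx matrix -/
def Am : Matrix (Fin 2) (Fin 2) ℝ := !![1, -1; 1, 1]

lemma Am_det : Am.det = 2 := by
  simp [Am, Matrix.det_fin_two_of]; norm_num

lemma Am_unit : IsUnit Am.det := by rw [Am_det]; norm_num

lemma Am_zpow_det (j : ℤ) : (Am ^ j).det = 2 ^ j := by
  cases j with
  | ofNat m => simp [Am_det]
  | negSucc m =>
    rw [zpow_negSucc, Matrix.det_nonsing_inv, Matrix.det_pow, Am_det, zpow_negSucc,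
      Ring.inverse_eq_inv']

lemma Am_zpow_det_ne (j : ℤ) : (Am ^ j).det ≠ 0 := by
  rw [Am_zpow_det]; positivity

lemma Am_transpose : Am.transpose = Bm := by
  ext i j
  fin_cases i <;> fin_cases j <;> simp [Am, Bm]

/-- the inverse transposed dilation -/
def Cj (j : ℤ) (ξ : ℝn 2) : ℝn 2 := ((Am ^ j).transpose⁻¹).mulVec ξ

lemma Cj_eq (j : ℤ) (ξ : ℝn 2) : Cj j ξ = (Bm ^ (-j)).mulVec ξ := by
  have h : IsUnit Bm.det := by
    rw [← Am_transpose, Matrix.det_transpose]; exact Am_unit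
  rw [Cj, Matrix.transpose_zpow, Am_transpose, Matrix.zpow_neg h]

lemma Bm_Cj (j : ℤ) (ξ : ℝn 2) : Bm.mulVec (Cj j ξ) = Cj (j - 1) ξ := by
  have h : IsUnit Bm.det := by
    rw [← Am_transpose, Matrix.det_transpose]; exact Am_unit
  rw [Cj_eq, Cj_eq, Matrix.mulVec_mulVec]
  congr 1
  rw [show -(j - 1) = 1 + -j by ring, Matrix.zpow_add h, zpow_one]

lemma Cj_norm_step (j : ℤ) (ξ : ℝn 2) : ‖Cj (j - 1) ξ‖ = ‖Bm.mulVec (Cj j ξ)‖ := by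
  rw [Bm_Cj]

lemma Cj_zero (ξ : ℝn 2) : Cj 0 ξ = ξ := by
  simp [Cj]

lemma Cj_norm_two (j : ℤ) (ξ : ℝn 2) : ‖Cj (j - 2) ξ‖ = 2 * ‖Cj j ξ‖ := by
  rw [← norm_Bm_Bm, Bm_Cj, Bm_Cj]
  rw [show j - 1 - 1 = j - 2 by ring]

lemma Cj_norm_neg (m : ℕ) (ξ : ℝn 2) : ‖Cj (-(2 * m : ℤ)) ξ‖ = 2 ^ m * ‖ξ‖ := by
  induction m with
  | zero => simp [Cj_zero]
  | succ m ih =>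
    rw [show (-(2 * ((m + 1 : ℕ) : ℤ)) : ℤ) = -(2 * (m : ℤ)) - 2 by push_cast; ring, Cj_norm_two, ih]
    ring

lemma Cj_norm_pos (m : ℕ) (ξ : ℝn 2) : ‖Cj (2 * m : ℤ) ξ‖ * 2 ^ m = ‖ξ‖ := by
  induction m with
  | zero => simp [Cj_zero]
  | succ m ih =>
    have h := Cj_norm_two (2 * ((m + 1 : ℕ) : ℤ)) ξ
    rw [show (2 * ((m + 1 : ℕ) : ℤ) - 2 : ℤ) = 2 * (m : ℤ) by push_cast; ring] at h
    rw [← ih, h]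
    ring

lemma Cj_anti (ξ : ℝn 2) : Antitone (fun j => ‖Cj j ξ‖) := by
  apply antitone_int_of_succ_le
  intro j
  have := norm_le_Bm (Cj (j + 1) ξ)
  rwa [Bm_Cj, add_sub_cancel_right] at this

lemma tele_hasSum (ξ : ℝn 2) (hξ : ξ ≠ 0) : HasSum (fun j : ℤ => tele (Cj j ξ)) 1 := by
  have hpos : 0 < ‖ξ‖ := norm_pos_iff.2 hξ
  obtain ⟨m, hm⟩ := pow_unbounded_of_one_lt (max (2 * ‖ξ‖) (‖ξ‖⁻¹)) (one_lt_two (α := ℝ))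
  have hm1 : 2 * ‖ξ‖ < 2 ^ m := (le_max_left _ _).trans_lt hm
  have hm2 : ‖ξ‖⁻¹ < 2 ^ m := (le_max_right _ _).trans_lt hm
  have hbig : ∀ j : ℤ, 2 * m ≤ j → Theta (Cj j ξ) = 1 := by
    intro j hj
    apply Theta_eq_one
    refine (Cj_anti ξ hj).trans ?_
    have h := Cj_norm_pos m ξ
    have h2 : (0 : ℝ) < 2 ^ m := by positivity
    show ‖Cj (2 * m : ℤ) ξ‖ ≤ 1 / 2
    nlinarith
  have hsmall : ∀ j : ℤ, j ≤ -(2 * m) → Theta (Cj j ξ) = 0 := by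
    intro j hj
    apply Theta_eq_zero
    refine le_trans ?_ (Cj_anti ξ hj)
    show 1 ≤ ‖Cj (-(2 * m) : ℤ) ξ‖
    rw [Cj_norm_neg]
    rw [inv_lt_iff_one_lt_mul₀ hpos] at hm2
    linarith
  have htele : ∀ j, tele (Cj j ξ) = Theta (Cj j ξ) ^ 2 - Theta (Cj (j - 1) ξ) ^ 2 := by
    intro j; rw [tele, Bm_Cj]
  have hsum : ∀ N : ℕ, ∑ i ∈ Finset.range N, tele (Cj (-(2 * m) + 1 + i) ξ) =
      Theta (Cj (-(2 * m) + N) ξ) ^ 2 - Theta (Cj (-(2 * m)) ξ) ^ 2 := by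
    intro N
    have := Finset.sum_range_sub (fun i : ℕ => Theta (Cj (-(2 * m : ℤ) + i) ξ) ^ 2) N
    simp only [Nat.cast_zero, add_zero] at this
    rw [← this]
    refine Finset.sum_congr rfl fun i _ => ?_
    rw [htele]
    push_cast
    congr 4 <;> ring_nf
  let e : ℕ ↪ ℤ := ⟨fun i => -(2 * m) + 1 + i, fun a b h => by simpa using h⟩
  have h1 : ∑ j ∈ (Finset.range (4 * m)).map e, tele (Cj j ξ) = 1 := by
    rw [Finset.sum_map]
    have := hsum (4 * m)
    rw [hbig (-(2 * m) + (4 * m : ℕ)) (by push_cast; linarith), hsmall _ le_rfl] at this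
    rw [show (1 : ℝ) = 1 ^ 2 - 0 ^ 2 by norm_num, ← this]
    rfl
  rw [← h1]
  apply hasSum_sum_of_ne_finset_zero
  intro j hj
  rw [htele]
  by_cases hj1 : j ≤ -(2 * m)
  · rw [hsmall j hj1, hsmall (j - 1) (by linarith), sub_self]
  by_cases hj2 : 2 * m < j
  · rw [hbig j (by linarith), hbig (j - 1) (by omega), sub_self]
  exfalso
  apply hj
  rw [Finset.mem_map]
  refine ⟨(j + 2 * m - 1).toNat, ?_, ?_⟩
  · rw [Finset.mem_range]; omega
  · show -(2 * m : ℤ) + 1 + ((j + 2 * m - 1).toNat : ℤ) = j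
    omega

lemma phi_window {ψ : ℝn 2 → ℂ} (hψ : MemLp ψ 2 volume)
    (hhat : IsFourierPair (fun ξ => (quincunxPsiHat ξ : ℂ)) ψ) :
    IsWindow phiHat (fun x => (1 / 4 : ℂ) * ψ x + (1 / 4 : ℂ) * ψ ((Am ^ (-1 : ℤ)).mulVec x) +
      (1 / 8 : ℂ) * ψ ((Am ^ (-2 : ℤ)).mulVec x)) := by
  have w := psi_window hψ hhat
  have d1 := Am_zpow_det_ne (-1)
  have d2 := Am_zpow_det_ne (-2)
  have m1 := (memLp_mulVec _ d1 hψ).const_mul (1 / 4 : ℂ)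
  have m2 := (memLp_mulVec _ d2 hψ).const_mul (1 / 8 : ℂ)
  have m0 := hψ.const_mul (1 / 4 : ℂ)
  have c1 : ∀ ξ, ((Am ^ (-1 : ℤ)).transpose⁻¹).mulVec ξ = Bm.mulVec ξ := by
    intro ξ
    show Cj (-1) ξ = _
    rw [show (-1 : ℤ) = 0 - 1 by norm_num, ← Bm_Cj, Cj_zero]
  have c2 : ∀ ξ, ((Am ^ (-2 : ℤ)).transpose⁻¹).mulVec ξ = Bm.mulVec (Bm.mulVec ξ) := by
    intro ξ
    show Cj (-2) ξ = _
    rw [show (-2 : ℤ) = 0 - 1 - 1 by norm_num, ← Bm_Cj, ← Bm_Cj, Cj_zero]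
  have z1 : ∀ {x : ℝn 2}, 1 ≤ ‖x‖ → quincunxPsiHat (Bm.mulVec x) = 0 :=
    fun h => psi_zero (h.trans (norm_le_Bm _))
  have z2 : ∀ {x : ℝn 2}, 1 ≤ ‖x‖ → quincunxPsiHat (Bm.mulVec (Bm.mulVec x)) = 0 :=
    fun h => z1 (h.trans (norm_le_Bm _))
  have n0 := w.mema.const_mul (1 / 4 : ℂ)
  have p1 := pair_mulVec _ d1 hhat
  have p2 := pair_mulVec _ d2 hhat
  simp only [c1] at p1
  simp only [c2] at p2
  have n1 := memLp_of_norm (psi_cont.comp Bm_cont) fun _ => z1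
  have n2 := memLp_of_norm (psi_cont.comp (Bm_cont.comp Bm_cont)) fun _ => z2
  have q0 := hhat.smul (1 / 4)
  have q1 := p1.smul (1 / 4)
  have q2 := p2.smul (1 / 8)
  have q := (q0.add q1 m0 n0 m1 ((n1.const_mul _).const_mul _)).add q2 (m0.add m1)
    (n0.add ((n1.const_mul _).const_mul _)) m2 ((n2.const_mul _).const_mul _)
  refine ⟨phi_cont, phi_bd, supp_of_norm fun _ => phi_zero, (m0.add m1).add m2,
    memLp_of_norm phi_cont fun _ => phi_zero, ?_⟩
  convert q using 1
  ext ξ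
  rw [Am_zpow_det, Am_zpow_det, phiHat]
  norm_num
  push_cast
  ring


lemma wavelet_apply (α : ℝn 2 → ℂ) (j : ℤ) (k : Fin 2 → ℤ) :
    waveletSystem Am ((2⁻¹ : ℝ) • 1) α (j, k) = dila (Am ^ j) (tran ((2⁻¹ : ℝ) • ivec k) α) := by
  simp only [waveletSystem]
  rw [Matrix.smul_mulVec, Matrix.one_mulVec]

lemma memLp_wavelet {α : ℝn 2 → ℂ} (hα : MemLp α 2 volume) (p : ℤ × (Fin 2 → ℤ)) :
    MemLp (waveletSystem Am ((2⁻¹ : ℝ) • 1) α p) 2 volume :=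
  memLp_dila _ (Am_zpow_det_ne _) (memLp_tran _ hα)

lemma Cj_cont (j : ℤ) : Continuous (Cj j) := by
  unfold Cj; fun_prop

lemma plancherel_lintegral {n : ℕ} {f fh : ℝn n → ℂ} (hf : MemLp f 2 volume)
    (hfh : MemLp fh 2 volume) (hp : IsFourierPair fh f) :
    ∫⁻ x, (‖fh x‖₊ : ℝ≥0∞) ^ 2 = ∫⁻ x, (‖f x‖₊ : ℝ≥0∞) ^ 2 := by
  rw [← ip_self_lintegral hf, ← ip_self_lintegral hfh, ip_eq_ip_hat hf hfh hf hfh hp hp]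

lemma bessel_of {a : ℝn 2 → ℝ} {α : ℝn 2 → ℂ} (wa : IsWindow a α) (K : ℝ)
    (hK : ∀ ξ : ℝn 2, ξ ≠ 0 → ∑' j : ℤ, ENNReal.ofReal (a (Cj j ξ) ^ 2) ≤ ENNReal.ofReal K) :
    IsBesselWith (waveletSystem Am ((2⁻¹ : ℝ) • 1) α) (4 * K) := by
  intro f hf
  obtain ⟨fh, hfh, hp⟩ := exists_hat hf
  rw [ENNReal.tsum_prod']
  simp_rw [wavelet_apply]
  simp_rw [fun j : ℤ => level_bessel (Am ^ j) (Am_zpow_det_ne j) hf hfh hp wa]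
  rw [ENNReal.tsum_mul_left, ← lintegral_tsum, ← plancherel_lintegral hf hfh hp,
    ENNReal.ofReal_mul (by norm_num), mul_assoc]
  · gcongr
    · norm_num
    · rw [← lintegral_const_mul' _ _ ENNReal.ofReal_ne_top]
      apply lintegral_mono_ae
      have hne : ∀ᵐ ξ : ℝn 2, ξ ≠ 0 := by
        simp [ae_iff, measure_singleton]
      filter_upwards [hne] with ξ hξ
      rw [ENNReal.tsum_mul_left, mul_comm]
      gcongr
      exact hK ξ hξ
  · intro j
    have m1 : AEMeasurable (fun ξ => (‖fh ξ‖₊ : ℝ≥0∞) ^ 2) volume :=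
      (hfh.1.aemeasurable.nnnorm.coe_nnreal_ennreal).pow_const 2
    have m2 : AEMeasurable (fun ξ => ENNReal.ofReal (a (Cj j ξ) ^ 2)) volume :=
      (ENNReal.measurable_ofReal.comp
        ((wa.cont.comp (Cj_cont j)).pow 2).measurable).aemeasurable
    exact m1.mul m2

lemma tele_tsum (ξ : ℝn 2) (hξ : ξ ≠ 0) : ∑' j : ℤ, ENNReal.ofReal (tele (Cj j ξ)) = 1 := by
  have h := tele_hasSum ξ hξ
  rw [← ENNReal.ofReal_tsum_of_nonneg (fun _ => tele_nonneg _) h.summable, h.tsum_eq,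
    ENNReal.ofReal_one]

lemma psi_bessel {ψ : ℝn 2 → ℂ} (w : IsWindow quincunxPsiHat ψ) :
    IsBesselWith (waveletSystem Am ((2⁻¹ : ℝ) • 1) ψ) (4 * 1) := by
  refine bessel_of w 1 fun ξ hξ => ?_
  rw [ENNReal.ofReal_one, ← tele_tsum ξ hξ]
  exact ENNReal.tsum_le_tsum fun j => ENNReal.ofReal_le_ofReal (psi_sq_le _)

lemma phi_bessel {φ : ℝn 2 → ℂ} (w : IsWindow phiHat φ) :
    IsBesselWith (waveletSystem Am ((2⁻¹ : ℝ) • 1) φ) (4 * 3) := by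
  refine bessel_of w 3 fun ξ hξ => ?_
  have h0 := tele_tsum ξ hξ
  have h1 : ∑' j : ℤ, ENNReal.ofReal (tele (Cj (j - 1) ξ)) = 1 := by
    rw [← h0]
    exact (Equiv.subRight (1 : ℤ)).tsum_eq (fun j => ENNReal.ofReal (tele (Cj j ξ)))
  have h2 : ∑' j : ℤ, ENNReal.ofReal (tele (Cj (j - 1 - 1) ξ)) = 1 := by
    rw [← h1]
    exact (Equiv.subRight (1 : ℤ)).tsum_eq (fun j => ENNReal.ofReal (tele (Cj (j - 1) ξ)))
  calc _ ≤ ∑' j : ℤ, (ENNReal.ofReal (tele (Cj j ξ)) + ENNReal.ofReal (tele (Cj (j - 1) ξ)) +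
        ENNReal.ofReal (tele (Cj (j - 1 - 1) ξ))) := by
        refine ENNReal.tsum_le_tsum fun j => ?_
        rw [← ENNReal.ofReal_add (tele_nonneg _) (tele_nonneg _),
          ← ENNReal.ofReal_add (add_nonneg (tele_nonneg _) (tele_nonneg _)) (tele_nonneg _)]
        apply ENNReal.ofReal_le_ofReal
        have := phi_sq_le (Cj j ξ)
        rwa [Bm_Cj, Bm_Cj] at this
    _ = 3 := by
        rw [ENNReal.tsum_add, ENNReal.tsum_add, h0, h1, h2]; norm_num
    _ = ENNReal.ofReal 3 := by simp

lemma toL2_eq {n : ℕ} {f : ℝn n → ℂ} (hf : MemLp f 2 volume) : toL2 f = hf.toLp f := by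
  rw [toL2, dif_pos hf]

lemma inner_toL2 {n : ℕ} {f g : ℝn n → ℂ} (hf : MemLp f 2 volume) (hg : MemLp g 2 volume) :
    inner ℂ (toL2 g) (toL2 f) = ip f g := by
  rw [toL2_eq hf, toL2_eq hg, L2.inner_def, ip]
  apply integral_congr_ae
  filter_upwards [hf.coeFn_toLp, hg.coeFn_toLp] with x h1 h2
  rw [h1, h2]
  simp

lemma norm_sq_toL2 {n : ℕ} {f : ℝn n → ℂ} (hf : MemLp f 2 volume) :
    ∫⁻ x, (‖f x‖₊ : ℝ≥0∞) ^ 2 = ENNReal.ofReal (‖toL2 f‖ ^ 2) := by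
  rw [← ip_self_lintegral hf, ← inner_toL2 hf hf, inner_self_eq_norm_sq_to_K]
  norm_cast

/-- Bessel synthesis: square-summable coefficients give summable expansions. -/
lemma bessel_summable {H ι : Type*} [NormedAddCommGroup H] [InnerProductSpace ℂ H]
    [CompleteSpace H] (F : ι → H) (C : ℝ) (hC : 0 ≤ C)
    (hB : ∀ (w : H) (s : Finset ι), ∑ i ∈ s, ‖inner ℂ (F i) w‖ ^ 2 ≤ C * ‖w‖ ^ 2)
    (c : ι → ℂ) (hc : Summable fun i => ‖c i‖ ^ 2) : Summable fun i => c i • F i := by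
  have key : ∀ s : Finset ι, ‖∑ i ∈ s, c i • F i‖ ^ 2 ≤ C * ∑ i ∈ s, ‖c i‖ ^ 2 := by
    intro s
    set w := ∑ i ∈ s, c i • F i with hw
    have h1 : ‖w‖ ^ 2 ≤ ∑ i ∈ s, ‖c i‖ * ‖inner ℂ (F i) w‖ := by
      have : (‖w‖ ^ 2 : ℝ) = ‖inner ℂ w w‖ := by
        rw [inner_self_eq_norm_sq_to_K]; simp
      rw [this]
      nth_rewrite 1 [hw]
      rw [sum_inner]
      refine (norm_sum_le _ _).trans (Finset.sum_le_sum fun i _ => ?_)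
      rw [inner_smul_left, norm_mul, RCLike.norm_conj]
    have h2 := Finset.sum_mul_sq_le_sq_mul_sq s (fun i => ‖c i‖) (fun i => ‖inner ℂ (F i) w‖)
    have h3 := hB w s
    have h4 : 0 ≤ ∑ i ∈ s, ‖c i‖ ^ 2 := Finset.sum_nonneg fun _ _ => by positivity
    have h5 : (‖w‖ ^ 2) ^ 2 ≤ (∑ i ∈ s, ‖c i‖ ^ 2) * (C * ‖w‖ ^ 2) :=
      (pow_le_pow_left₀ (by positivity) h1 2).trans (h2.trans (by gcongr))
    rcases (sq_nonneg ‖w‖).eq_or_lt with h | h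
    · rw [← h]; positivity
    · have : ‖w‖ ^ 2 * ‖w‖ ^ 2 ≤ (C * ∑ i ∈ s, ‖c i‖ ^ 2) * ‖w‖ ^ 2 := by nlinarith
      exact le_of_mul_le_mul_right this h
  rw [summable_iff_vanishing_norm]
  intro ε hε
  obtain ⟨s, hs⟩ := summable_iff_vanishing_norm.1 hc (ε ^ 2 / (C + 1)) (by positivity)
  refine ⟨s, fun t ht => ?_⟩
  have h1 := hs t ht
  rw [Real.norm_of_nonneg (Finset.sum_nonneg fun _ _ => by positivity),
    lt_div_iff₀ (by positivity)] at h1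
  have h2 := key t
  have h4 : 0 ≤ ∑ i ∈ t, ‖c i‖ ^ 2 := Finset.sum_nonneg fun _ _ => by positivity
  refine lt_of_pow_lt_pow_left₀ 2 hε.le ?_
  nlinarith


lemma bessel_sum_le {n : ℕ} {ι : Type*} {G : ι → ℝn n → ℂ} {C : ℝ} (hC : 0 ≤ C)
    (hG : IsBesselWith G C) {f : ℝn n → ℂ} (hf : MemLp f 2 volume) (s : Finset ι) :
    ∑ i ∈ s, ‖ip f (G i)‖ ^ 2 ≤ C * ‖toL2 f‖ ^ 2 := by
  have h := (ENNReal.sum_le_tsum s).trans (hG f hf)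
  rw [norm_sq_toL2 hf, ← ENNReal.ofReal_mul hC] at h
  have h2 : ∑ i ∈ s, ((‖ip f (G i)‖₊ : ℝ≥0∞)) ^ 2 =
      ENNReal.ofReal (∑ i ∈ s, ‖ip f (G i)‖ ^ 2) := by
    rw [ENNReal.ofReal_sum_of_nonneg (fun _ _ => by positivity)]
    refine Finset.sum_congr rfl fun i _ => ?_
    rw [ENNReal.ofReal_pow (norm_nonneg _), ofReal_norm]
    rfl
  rw [h2, ENNReal.ofReal_le_ofReal_iff (by positivity)] at h
  exact h

lemma scale_hasSum {fh hh : ℝn 2 → ℂ} (hfh : MemLp fh 2 volume) (hhh : MemLp hh 2 volume) :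
    HasSum (fun j : ℤ => ∫ ξ, conj (fh ξ) * hh ξ * (tele (Cj j ξ) : ℂ))
      (∫ ξ, conj (fh ξ) * hh ξ) := by
  have hcf : MemLp (fun ξ => conj (fh ξ)) 2 volume := hfh.star
  have hi : Integrable (fun ξ => conj (fh ξ) * hh ξ) := hcf.integrable_mul hhh
  have hne : ∀ᵐ ξ : ℝn 2, ξ ≠ 0 := by
    simp [ae_iff, measure_singleton]
  have htc : ∀ j, Continuous (fun ξ => tele (Cj j ξ)) := by
    intro j
    have h1 := Theta_cont.comp (Cj_cont j)
    have h2 := Theta_cont.comp (Bm_cont.comp (Cj_cont j))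
    exact (h1.pow 2).sub (h2.pow 2)
  refine hasSum_integral_of_dominated_convergence
    (fun j ξ => ‖conj (fh ξ) * hh ξ‖ * tele (Cj j ξ)) ?_ ?_ ?_ ?_ ?_
  · intro j
    exact hi.1.mul (Complex.continuous_ofReal.comp (htc j)).aestronglyMeasurable
  · intro j
    refine .of_forall fun ξ => ?_
    rw [norm_mul, Complex.norm_real, Real.norm_of_nonneg (tele_nonneg _)]
  · filter_upwards [hne] with ξ hξ
    exact (tele_hasSum ξ hξ).summable.mul_left _
  · refine hi.norm.congr ?_
    filter_upwards [hne] with ξ hξ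
    rw [tsum_mul_left, (tele_hasSum ξ hξ).tsum_eq, mul_one]
  · filter_upwards [hne] with ξ hξ
    have h := (Complex.hasSum_ofReal.2 (tele_hasSum ξ hξ)).mul_left (conj (fh ξ) * hh ξ)
    simpa using h

lemma reconstruction {ψ φ : ℝn 2 → ℂ} (wψ : IsWindow quincunxPsiHat ψ)
    (wφ : IsWindow phiHat φ) :
    ReconstructionProp (waveletSystem Am ((2⁻¹ : ℝ) • 1) ψ)
      (waveletSystem Am ((2⁻¹ : ℝ) • 1) φ) := by
  intro f hf
  set F := waveletSystem Am ((2⁻¹ : ℝ) • 1) ψ with hF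
  set G := waveletSystem Am ((2⁻¹ : ℝ) • 1) φ with hG
  have mF : ∀ p, MemLp (F p) 2 volume := memLp_wavelet wψ.memα
  have hw : ∀ w : Lp ℂ 2 (volume : Measure (ℝn 2)), toL2 (w : ℝn 2 → ℂ) = w := by
    intro w
    rw [toL2_eq (Lp.memLp w), Lp.toLp_coeFn]
  have hin : ∀ (w : Lp ℂ 2 (volume : Measure (ℝn 2))) p,
      inner ℂ (toL2 (F p)) w = ip (w : ℝn 2 → ℂ) (F p) := by
    intro w p
    rw [← inner_toL2 (Lp.memLp w) (mF p), hw]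
  have hS : Summable (fun p => ip f (G p) • toL2 (F p)) := by
    refine bessel_summable (fun p => toL2 (F p)) (4 * 1) (by norm_num) ?_ _ ?_
    · intro w s
      have := bessel_sum_le (by norm_num) (psi_bessel wψ) (Lp.memLp w) s
      rw [hw] at this
      simp_rw [hin]
      exact this
    · exact summable_of_sum_le (fun _ => by positivity)
        (fun s => bessel_sum_le (by norm_num) (phi_bessel wφ) hf s)
  obtain ⟨S, hS⟩ := hS
  convert hS using 1
  obtain ⟨fh, hfh, hp⟩ := exists_hat hf
  refine ext_inner_right ℂ fun w => ?_
  obtain ⟨hh, hhh, hp'⟩ := exists_hat (Lp.memLp w)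
  have h1 : HasSum (fun p => conj (ip f (G p)) * ip (w : ℝn 2 → ℂ) (F p)) (inner ℂ S w) := by
    have := (hS.mapL (innerSL ℂ w)).star
    simp only [innerSL_apply_apply, inner_smul_right, star_mul'] at this
    simp only [Complex.star_def, inner_conj_symm, hin] at this
    exact this
  have h2 := h1.prod_fiberwise (g := fun j : ℤ => ∫ ξ, conj (fh ξ) * hh ξ * (tele (Cj j ξ) : ℂ)) (by
    intro j
    have := level_hasSum (Am ^ j) (Am_zpow_det_ne j) hf hfh hp (Lp.memLp w) hhh hp' wφ wψ
    simp only [hF, hG, wavelet_apply]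
    convert this using 1
    rw [← integral_const_mul]
    congr 1
    ext ξ
    rw [← psi_mul_phi]
    simp only [Cj]
    push_cast
    ring)
  have h3 := h2.unique (scale_hasSum hfh hhh)
  rw [h3, ← hw w, inner_toL2 (Lp.memLp w) hf, ip_eq_ip_hat (Lp.memLp w) hhh hf hfh hp' hp, ip]
  congr 1
  ext ξ
  ring


open Matrix in
/-- Example 2.6: for the quincunx matrix `A`, the bandlimited generator
`ψ` (with `ψ̂(ξ) = g(|ξ₁|,|ξ₂|)`) and `φ = (1/4)ψ + (1/4)ψ(A⁻¹·) + (1/8)ψ(A⁻²·)` generate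
dual wavelet frames over the translation lattice `(1/2)ℤ²`. -/
theorem quincunx_dual_wavelet_frames
    (A : Matrix (Fin 2) (Fin 2) ℝ) (hA : A = !![1, -1; 1, 1])
    (ψ : ℝn 2 → ℂ) (hψ : MemLp ψ 2 volume)
    (hhat : IsFourierPair (fun ξ => (quincunxPsiHat ξ : ℂ)) ψ)
    (φ : ℝn 2 → ℂ)
    (hφ : φ = fun x => (1 / 4 : ℂ) * ψ x + (1 / 4 : ℂ) * ψ ((A ^ (-1 : ℤ)).mulVec x) +
      (1 / 8 : ℂ) * ψ ((A ^ (-2 : ℤ)).mulVec x)) :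
    AreDualFrames (waveletSystem A ((2⁻¹ : ℝ) • 1) ψ)
      (waveletSystem A ((2⁻¹ : ℝ) • 1) φ) := by
  have hA' : A = Am := hA
  subst hA'
  have wψ := psi_window hψ hhat
  have wφ : IsWindow phiHat φ := by
    rw [hφ]; exact phi_window hψ hhat
  exact ⟨⟨_, psi_bessel wψ⟩, ⟨_, phi_bessel wφ⟩, reconstruction wψ wφ⟩

end
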